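/- Every root r of L satisfies ht(r) ≥ 1, and ht(r) = 1 if and only if r is a unit multiple of one of the 26 roots of the diagram D. Equivalently, the mirrors of the 26 reflections of D are exactly the mirrors closest to the Weyl vector ρ̄. -/

import Mathlib

noncomputable section

open ComplexConjugate

namespace Bimonster

/-- The primitive cube root of unity `ω = e^{2πi/3}`. -/
def ω : ℂ := Complex.exp (2 * (Real.pi : ℂ) * Complex.I / 3)

/-- `θ = ω - ω̄ = √-3`. -/
def θ : ℂ := ω - conj ω

/-- `ξ = e^{-πi/6}`. -/
def ξ : ℂ := Complex.exp (-((Real.pi : ℂ) * Complex.I) / 6)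

/-- Membership in the ring of Eisenstein integers `ℰ = ℤ[ω] ⊆ ℂ`. -/
def EisP (z : ℂ) : Prop := ∃ a b : ℤ, z = (a : ℂ) + (b : ℂ) * ω

/-- The units of the ring of Eisenstein integers. -/
def EisUnit (z : ℂ) : Prop :=
  z = 1 ∨ z = -1 ∨ z = ω ∨ z = -ω ∨ z = ω ^ 2 ∨ z = -ω ^ 2

/-- The underlying 14-dimensional complex vector space of `L = 3E₈ ⊕ H`. -/
abbrev V : Type := Fin 14 → ℂ

/-- The Hermitian form of `L = 3E₈ ⊕ H`: negative definite standard form on the twelve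
`E₈`-coordinates, and the hyperbolic cell with Gram matrix `[[0, θ̄], [θ, 0]]` on the
last two coordinates.  It is conjugate-linear in the first variable. -/
def herm (u v : V) : ℂ :=
  -(∑ i : Fin 12, conj (u (Fin.castLE (by norm_num) i)) * v (Fin.castLE (by norm_num) i)) +
    conj (u 12) * conj θ * v 13 + conj (u 13) * θ * v 12

/-- First generator of the ternary tetracode `𝒞₄ ⊆ 𝔽₃⁴`. -/
def tet1 : Fin 4 → ℤ := ![1, 1, -1, 0]

/-- Second generator of the ternary tetracode `𝒞₄ ⊆ 𝔽₃⁴`. -/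
def tet2 : Fin 4 → ℤ := ![0, 1, 1, 1]

/-- The complex `E₈` lattice: vectors of `ℰ⁴` whose reduction mod `θ` lies in the
ternary tetracode. -/
def inE8 (w : Fin 4 → ℂ) : Prop :=
  (∀ i, EisP (w i)) ∧
    ∃ s t : ℤ, ∀ i : Fin 4, ∃ a b : ℤ,
      w i - ((tet1 i * s + tet2 i * t : ℤ) : ℂ) = θ * ((a : ℂ) + (b : ℂ) * ω)

/-- The lattice `L = 3E₈ ⊕ H` as a subset of `ℂ¹⁴`. -/
def Lset : Set V :=
  {v | (∀ k : Fin 3,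
      inE8 fun i : Fin 4 =>
        v ⟨4 * (k : ℕ) + (i : ℕ), by have hk := k.isLt; have hi := i.isLt; omega⟩) ∧
    EisP (v 12) ∧ EisP (v 13)}

/-- A root of `L`: a primitive lattice vector of norm `-3`. -/
def IsRoot (r : V) : Prop :=
  r ∈ Lset ∧ herm r r = -3 ∧
    ∀ α : ℂ, EisP α → ∀ y ∈ Lset, r = α • y → EisUnit α

/-- The `μ`-reflection in a vector `r`: `v ↦ v − (1−μ)·r·⟨r,v⟩/|r|²`. -/
def reflMap (μ : ℂ) (r v : V) : V := v - ((1 - μ) * herm r v / herm r r) • r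

/-- The automorphism group of the lattice `L`: invertible `ℂ`-linear maps preserving
the lattice and the Hermitian form. -/
def AutL : Subgroup (V ≃ₗ[ℂ] V) where
  carrier := {g | (∀ v : V, v ∈ Lset ↔ g v ∈ Lset) ∧ ∀ u v : V, herm (g u) (g v) = herm u v}
  one_mem' := ⟨fun _ => Iff.rfl, fun _ _ => rfl⟩
  mul_mem' := by
    rintro f g ⟨hf1, hf2⟩ ⟨hg1, hg2⟩
    refine ⟨fun v => ?_, fun u v => ?_⟩
    · exact (hg1 v).trans (hf1 (g v))
    · exact (hf2 (g u) (g v)).trans (hg2 u v)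
  inv_mem' := by
    rintro g ⟨hg1, hg2⟩
    refine ⟨fun v => ?_, fun u v => ?_⟩
    · have h := hg1 (g.symm v)
      have hv : g (g.symm v) = v := g.apply_symm_apply v
      rw [hv] at h
      exact h.symm
    · have h := hg2 (g.symm u) (g.symm v)
      have hu : g (g.symm u) = u := g.apply_symm_apply u
      have hv : g (g.symm v) = v := g.apply_symm_apply v
      rw [hu, hv] at h
      exact h.symm

/-- The set of elements of `Aut(L)` acting as the `ω`-reflection in some root
belonging to `S`. -/
def ReflAutos (S : Set V) : Set (V ≃ₗ[ℂ] V) :=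
  {g | g ∈ AutL ∧ ∃ r ∈ S, ∀ v, g v = reflMap ω r v}

/-- The reflection group `R(L)`: the subgroup of `Aut(L)` generated by the
`ω`-reflections in all roots of `L`. -/
def RL : Subgroup (V ≃ₗ[ℂ] V) := Subgroup.closure (ReflAutos {r | IsRoot r})

/-- Two roots are adjacent when `|⟨a,b⟩| = √3`, i.e. when their `ω`-reflections braid. -/
def Adj (a b : V) : Prop := ‖herm a b‖ = Real.sqrt 3

/-- A set of roots is connected if the graph given by adjacency on it is connected. -/
def ConnectedSet (Φ : Set V) : Prop :=
  ∀ a ∈ Φ, ∀ b ∈ Φ, Relation.ReflTransGen (fun x y => x ∈ Φ ∧ y ∈ Φ ∧ Adj x y) a b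

/-- `Rad Φ` is the radical of a set `Φ` of roots: the closure of `Φ` under reflecting
members of the set in each other (and identification of unit multiples). -/
inductive Rad (Φ : Set V) : V → Prop
  | base {r : V} : r ∈ Φ → Rad Φ r
  | refl {a b : V} : Rad Φ a → Rad Φ b → Rad Φ (reflMap ω a b)
  | inv {a b : V} : Rad Φ a → Rad Φ b → Rad Φ (reflMap (conj ω) a b)
  | unit {u : ℂ} {r : V} : EisUnit u → Rad Φ r → Rad Φ (u • r)

/-- Shorthand for the entry `-θω²` occurring in the coordinates of the 26 roots. -/
def qc : ℂ := -(θ * ω ^ 2)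

/- The 26 roots of the diagram `D` in the coordinate system `3E₈ ⊕ H`. -/

def rA : V := ![0, 0, 0, 0, 0, 0, 0, 0, 0, 0, 0, 0, 1, ω ^ 2]
def rC1 : V := ![qc, 0, 0, 0, 0, 0, 0, 0, 0, 0, 0, 0, 0, 0]
def rC2 : V := ![0, 0, 0, 0, qc, 0, 0, 0, 0, 0, 0, 0, 0, 0]
def rC3 : V := ![0, 0, 0, 0, 0, 0, 0, 0, qc, 0, 0, 0, 0, 0]
def rE1 : V := ![0, qc, 0, 0, 0, 0, 0, 0, 0, 0, 0, 0, 0, 0]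
def rE2 : V := ![0, 0, 0, 0, 0, qc, 0, 0, 0, 0, 0, 0, 0, 0]
def rE3 : V := ![0, 0, 0, 0, 0, 0, 0, 0, 0, qc, 0, 0, 0, 0]
def rA1 : V := ![0, 0, 0, 0, 0, 0, 0, qc, 0, 0, 0, qc, ω, ω ^ 2]
def rA2 : V := ![0, 0, 0, qc, 0, 0, 0, 0, 0, 0, 0, qc, ω, ω ^ 2]
def rA3 : V := ![0, 0, 0, qc, 0, 0, 0, qc, 0, 0, 0, 0, ω, ω ^ 2]
def rG1 : V := ![0, 0, 0, qc, 0, 0, -qc, qc, 0, 0, -qc, qc, 2 * ω, 2 * ω ^ 2]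
def rG2 : V := ![0, 0, -qc, qc, 0, 0, 0, qc, 0, 0, -qc, qc, 2 * ω, 2 * ω ^ 2]
def rG3 : V := ![0, 0, -qc, qc, 0, 0, -qc, qc, 0, 0, 0, qc, 2 * ω, 2 * ω ^ 2]
def rF : V := ![0, 1, 1, -2, 0, 1, 1, -2, 0, 1, 1, -2, -2 + ω, -θ]
def rB1 : V := ![1, 0, 1, -1, 0, 0, 0, 0, 0, 0, 0, 0, -1, 0]
def rB2 : V := ![0, 0, 0, 0, 1, 0, 1, -1, 0, 0, 0, 0, -1, 0]
def rB3 : V := ![0, 0, 0, 0, 0, 0, 0, 0, 1, 0, 1, -1, -1, 0]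
def rD1 : V := ![1, 1, -1, 0, 0, 0, 0, 0, 0, 0, 0, 0, 0, 0]
def rD2 : V := ![0, 0, 0, 0, 1, 1, -1, 0, 0, 0, 0, 0, 0, 0]
def rD3 : V := ![0, 0, 0, 0, 0, 0, 0, 0, 1, 1, -1, 0, 0, 0]
def rF1 : V := ![0, 1, 1, 1, 0, 0, 0, 0, 0, 0, 0, 0, 0, 0]
def rF2 : V := ![0, 0, 0, 0, 0, 1, 1, 1, 0, 0, 0, 0, 0, 0]
def rF3 : V := ![0, 0, 0, 0, 0, 0, 0, 0, 0, 1, 1, 1, 0, 0]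
def rZ1 : V := ![0, 1, 1, -2, 1, 0, 1, -1, 1, 0, 1, -1, qc, -θ]
def rZ2 : V := ![1, 0, 1, -1, 0, 1, 1, -2, 1, 0, 1, -1, qc, -θ]
def rZ3 : V := ![1, 0, 1, -1, 1, 0, 1, -1, 0, 1, 1, -2, qc, -θ]

/-- The 13 roots of `D` labelled by the points of `P²(𝔽₃)`. -/
def pt : Fin 13 → V :=
  ![rA, rC1, rC2, rC3, rE1, rE2, rE3, rA1, rA2, rA3, rG1, rG2, rG3]

/-- The 13 roots of `D` labelled by the lines of `P²(𝔽₃)`. -/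
def lnr : Fin 13 → V :=
  ![rF, rB1, rB2, rB3, rD1, rD2, rD3, rF1, rF2, rF3, rZ1, rZ2, rZ3]

/-- The 26 roots of the diagram `D` (the incidence graph of `P²(𝔽₃)`). -/
def D26 : Set V := Set.range pt ∪ Set.range lnr

/-- The 16 roots forming the `M₆₆₆` diagram. -/
def M16 : Set V :=
  Set.range
    (![rA, rB1, rB2, rB3, rC1, rC2, rC3, rD1, rD2, rD3, rE1, rE2, rE3, rF1, rF2, rF3] :
      Fin 16 → V)

/-- The 26 vectors `(ρ₁,…,ρ₂₆) = (x₁,…,x₁₃, ξl₁,…,ξl₁₃)`. -/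
def ρv : Fin 26 → V := fun i =>
  if h : (i : ℕ) < 13 then pt ⟨(i : ℕ), h⟩
  else ξ • lnr ⟨(i : ℕ) - 13, by have := i.isLt; omega⟩

/-- The Weyl vector `ρ̄ = (Σ points + ξ Σ lines)/26`. -/
def ρbar : V := (26 : ℂ)⁻¹ • ((∑ i : Fin 13, pt i) + ξ • ∑ i : Fin 13, lnr i)

/-- The height of a root: `ht(r) = |⟨ρ̄, r⟩| / |ρ̄|²`. -/
def ht (r : V) : ℝ := ‖herm ρbar r‖ / ‖herm ρbar ρbar‖

/-!
Write `w_𝒫`, `w_ℒ` for the norm `3` vectors orthogonal to all point roots, respectively all line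
roots.  The thirteen point roots `xᵢ` and `w_𝒫` form an orthogonal basis of `ℂ¹⁴`, in which a root
`r` has coordinates `pᵢ = ⟨xᵢ, r⟩ / θ` and `α = ⟨w_𝒫, r⟩ / θ` in `ℰ` with `∑ |pᵢ|² = 3 + |α|²`, and
`ht r = |(4 + √3) α - ∑ pᵢ| / √3`.  If `ht r ≤ 1`, the Cauchy–Schwarz bound on `∑ pᵢ` forces
`|α|² < 3` or the same for the line roots and `w_ℒ`; by symmetry assume the former, so `|α|² ≤ 1`.

Pairing `r` with the line roots gives `∑_{i ∈ l} pᵢ ≡ α` modulo `θ` for every line `l` of `P²(𝔽₃)`.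
If `α = 0`, then `∑ |pᵢ|² = 3`, and through every point there is a line on which no other `pᵢ` is
nonzero; hence `θ` divides all `pᵢ`, only one of them is nonzero, and `r` is a multiple of a point
root.  If `|α|² = 1`, then `∑ |pᵢ|² = 4` and the support of `p` meets every line.  A blocking set of
four points is a line, and `ht r ≤ 1` forces `pᵢ = α` along it, so `r` is a multiple of a line root.
-/

section EisensteinIntegers

/-- The ring `ℰ` of Eisenstein integers as an abstract ring: `⟨a, b⟩` stands for `a + bω`. -/
abbrev Eis : Type := QuadraticAlgebra ℤ (-1) (-1)

/-- The generator `ω` of `ℰ`. -/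
def eisω : Eis := ⟨0, 1⟩

/-- The prime `θ = √-3` of `ℰ`. -/
def eisθ : Eis := 1 + 2 * eisω

lemma omega_eq_exp : ω = Complex.exp (((Real.pi - Real.pi / 3 : ℝ) : ℂ) * Complex.I) := by
  rw [ω]; congr 1; push_cast; ring

lemma xi_eq_exp : ξ = Complex.exp (((-(Real.pi / 6) : ℝ) : ℂ) * Complex.I) := by
  rw [ξ]; congr 1; push_cast; ring

lemma omega_re : ω.re = -1 / 2 := by
  rw [omega_eq_exp, Complex.exp_ofReal_mul_I_re, Real.cos_pi_sub, Real.cos_pi_div_three]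
  norm_num

lemma omega_im : ω.im = √3 / 2 := by
  rw [omega_eq_exp, Complex.exp_ofReal_mul_I_im, Real.sin_pi_sub, Real.sin_pi_div_three]

lemma xi_re : ξ.re = √3 / 2 := by
  rw [xi_eq_exp, Complex.exp_ofReal_mul_I_re, Real.cos_neg, Real.cos_pi_div_six]

lemma xi_im : ξ.im = -1 / 2 := by
  rw [xi_eq_exp, Complex.exp_ofReal_mul_I_im, Real.sin_neg, Real.sin_pi_div_six]
  norm_num

lemma sqrt_three_sq : (√3 : ℝ) ^ 2 = 3 := Real.sq_sqrt (by norm_num)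

lemma omega_sq : ω ^ 2 = -1 - ω := by
  apply Complex.ext <;> simp [pow_two, omega_re, omega_im] <;> linarith [sqrt_three_sq]

lemma conj_omega : conj ω = -1 - ω := by
  apply Complex.ext <;> simp [omega_re, omega_im]
  norm_num

lemma theta_eq : θ = 1 + 2 * ω := by rw [θ, conj_omega]; ring

lemma norm_omega : ‖ω‖ = 1 := by rw [omega_eq_exp, Complex.norm_exp_ofReal_mul_I]

lemma norm_xi : ‖ξ‖ = 1 := by rw [xi_eq_exp, Complex.norm_exp_ofReal_mul_I]

lemma xi_mul_two_add_omega : ξ * (2 + ω) = √3 := by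
  apply Complex.ext <;> simp [omega_re, omega_im, xi_re, xi_im] <;> linarith [sqrt_three_sq]

lemma sqrt_three_mul_xi : (√3 : ℂ) * ξ = 1 - ω := by
  apply Complex.ext <;> simp [omega_re, omega_im, xi_re, xi_im] <;> linarith [sqrt_three_sq]

/-- The embedding of `ℰ` in `ℂ`. -/
def toComplex : Eis →ₐ[ℤ] ℂ :=
  QuadraticAlgebra.lift ⟨ω, by simp only [neg_smul, one_smul]; linear_combination omega_sq⟩

lemma toComplex_mk (a b : ℤ) : toComplex ⟨a, b⟩ = a + b * ω := by
  simp [toComplex, QuadraticAlgebra.lift]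

lemma toComplex_eisω : toComplex eisω = ω := by simp [eisω, toComplex_mk]

lemma toComplex_eisθ : toComplex eisθ = θ := by
  rw [eisθ, map_add, map_mul, map_one, map_ofNat, toComplex_eisω, theta_eq]

lemma exists_toComplex_eq {z : ℂ} (hz : EisP z) : ∃ w, toComplex w = z := by
  obtain ⟨a, b, rfl⟩ := hz
  exact ⟨⟨a, b⟩, toComplex_mk a b⟩

lemma toComplex_star (z : Eis) : toComplex (star z) = conj (toComplex z) := by
  obtain ⟨a, b⟩ := z
  simp only [QuadraticAlgebra.star_mk, toComplex_mk, map_add, map_mul, map_intCast, conj_omega]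
  push_cast
  ring

lemma toComplex_injective : Function.Injective toComplex := by
  refine (injective_iff_map_eq_zero _).2 fun ⟨a, b⟩ h => ?_
  rw [toComplex_mk] at h
  have hb : b = 0 := by simpa [omega_im] using congrArg Complex.im h
  have ha : a = 0 := by simpa [hb] using h
  rw [ha, hb]
  rfl

instance : IsDomain Eis := toComplex_injective.isDomain toComplex.toRingHom

instance : CharZero Eis := toComplex.toRingHom.charZero

lemma eis_three_ne_zero : (3 : Eis) ≠ 0 := by decide

lemma intCast_norm (z : Eis) : (z.norm : Eis) = z * star z :=
  QuadraticAlgebra.algebraMap_norm_eq_mul_star z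

lemma norm_toComplex_sq (z : Eis) : ‖toComplex z‖ ^ 2 = z.norm := by
  have h := congrArg toComplex (intCast_norm z)
  rw [map_mul, toComplex_star, Complex.mul_conj, Complex.normSq_eq_norm_sq, map_intCast] at h
  exact_mod_cast h.symm

lemma norm_toComplex (z : Eis) : ‖toComplex z‖ = √z.norm := by
  rw [← norm_toComplex_sq, Real.sqrt_sq (norm_nonneg _)]

lemma eis_norm_nonneg (z : Eis) : 0 ≤ z.norm := by
  exact_mod_cast norm_toComplex_sq z ▸ sq_nonneg ‖toComplex z‖

lemma eq_zero_of_norm_eq_zero {z : Eis} (hz : z.norm = 0) : z = 0 := by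
  have h := norm_toComplex_sq z
  rw [hz, Int.cast_zero, sq_eq_zero_iff, norm_eq_zero] at h
  exact toComplex_injective (h.trans (map_zero _).symm)

lemma norm_eisθ : eisθ.norm = 3 := by decide

lemma eisθ_ne_zero : eisθ ≠ 0 := by decide

lemma eisθ_mul_eisθ : eisθ * eisθ = -3 := by decide

lemma star_eisθ : star eisθ = -eisθ := by decide

lemma eisUnit_toComplex {u : Eis} (hu : u.norm = 1) : EisUnit (toComplex u) := by
  obtain ⟨a, b⟩ := u
  have h : a ^ 2 - a * b + b ^ 2 = 1 := by
    rw [QuadraticAlgebra.norm_def] at hu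
    linear_combination hu
  have ha : a ∈ Set.Icc (-1) 1 := by constructor <;> nlinarith [sq_nonneg (a - 2 * b)]
  have hb : b ∈ Set.Icc (-1) 1 := by constructor <;> nlinarith [sq_nonneg (2 * a - b)]
  obtain ⟨ha₁, ha₂⟩ := ha
  obtain ⟨hb₁, hb₂⟩ := hb
  rw [EisUnit, omega_sq, toComplex_mk]
  interval_cases a <;> interval_cases b <;> norm_num at h <;> norm_num [sub_eq_add_neg, add_comm]

lemma norm_eq_one_of_eisUnit {u : ℂ} (hu : EisUnit u) : ‖u‖ = 1 := by
  rcases hu with rfl | rfl | rfl | rfl | rfl | rfl <;> simp [norm_omega]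

/-- Reduction `ℰ → ℰ/θ = 𝔽₃`, which sends `ω` to `1`. -/
def modTheta : Eis →ₐ[ℤ] ZMod 3 :=
  QuadraticAlgebra.lift ⟨1, by decide⟩

lemma modTheta_mk (a b : ℤ) : modTheta ⟨a, b⟩ = a + b := by
  simp [modTheta, QuadraticAlgebra.lift]

lemma modTheta_star (z : Eis) : modTheta (star z) = modTheta z := by
  obtain ⟨a, b⟩ := z
  have three : (3 : ZMod 3) = 0 := by decide
  rw [QuadraticAlgebra.star_mk, modTheta_mk, modTheta_mk]
  push_cast
  linear_combination -b * three

lemma intCast_norm_eq_modTheta_sq (z : Eis) : ((z.norm : ℤ) : ZMod 3) = modTheta z ^ 2 := by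
  rw [← map_intCast modTheta, intCast_norm, map_mul, modTheta_star, sq]

lemma norm_ne_two (z : Eis) : z.norm ≠ 2 := fun h => by
  have sq_ne_two : ∀ m : ZMod 3, ((2 : ℤ) : ZMod 3) ≠ m ^ 2 := by decide
  exact sq_ne_two (modTheta z) (h ▸ intCast_norm_eq_modTheta_sq z)

lemma theta_dvd_iff_modTheta_eq_zero {z : Eis} : eisθ ∣ z ↔ modTheta z = 0 := by
  constructor
  · rintro ⟨w, rfl⟩
    rw [map_mul, show modTheta eisθ = 0 by decide, zero_mul]
  · obtain ⟨a, b⟩ := z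
    intro h
    rw [modTheta_mk, ← Int.cast_add, ZMod.intCast_zmod_eq_zero_iff_dvd] at h
    obtain ⟨k, hk⟩ := h
    obtain rfl : b = 3 * k - a := by push_cast at hk; linarith
    refine ⟨⟨2 * k - a, k - a⟩, ?_⟩
    ext <;> simp [eisθ, eisω, QuadraticAlgebra.re_one, QuadraticAlgebra.im_one,
      QuadraticAlgebra.re_ofNat, QuadraticAlgebra.im_ofNat] <;> ring

lemma theta_dvd_iff_three_dvd_norm {z : Eis} : eisθ ∣ z ↔ 3 ∣ z.norm := by
  rw [theta_dvd_iff_modTheta_eq_zero, ← sq_eq_zero_iff, ← intCast_norm_eq_modTheta_sq,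
    ZMod.intCast_zmod_eq_zero_iff_dvd]
  rfl

lemma exists_eq_theta_mul_of_norm_eq_three {z : Eis} (hz : z.norm = 3) :
    ∃ u : Eis, u.norm = 1 ∧ z = eisθ * u := by
  obtain ⟨u, rfl⟩ := theta_dvd_iff_three_dvd_norm.2 (dvd_of_eq hz.symm)
  rw [map_mul, norm_eisθ] at hz
  exact ⟨u, by linarith, rfl⟩

end EisensteinIntegers

section ProjectivePlanes

open Configuration ProjectivePlane Finset

variable {P L : Type*} [Membership P L] [ProjectivePlane P L]

lemma card_lines_through [Finite P] [Fintype L] (p : P) [∀ l : L, Decidable (p ∈ l)] :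
    #{l : L | p ∈ l} = order P L + 1 := by
  rw [← lineCount_eq L p, lineCount, Nat.card_eq_fintype_card, Fintype.card_subtype]

lemma card_points_on [Fintype P] [Finite L] (l : L) [∀ p : P, Decidable (p ∈ l)] :
    #{p : P | p ∈ l} = order P L + 1 := by
  rw [← pointCount_eq P l, pointCount, Nat.card_eq_fintype_card, Fintype.card_subtype]

lemma card_lines_through_pair [DecidableEq P] [Finite P] [Fintype L]
    [∀ (p : P) (l : L), Decidable (p ∈ l)] (k p : P) :
    #{l : L | k ∈ l ∧ p ∈ l} = 1 + if p = k then order P L else 0 := by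
  split_ifs with h
  · simp_rw [h, and_self, card_lines_through, add_comm]
  · obtain ⟨l, hl, unique⟩ := HasLines.existsUnique_line P L k p (Ne.symm h)
    exact card_eq_one.2 ⟨l, by ext m; simpa using ⟨unique m, fun hm => hm ▸ hl⟩⟩

lemma sum_pencil [Fintype P] [Fintype L] [∀ (p : P) (l : L), Decidable (p ∈ l)] (N : P → ℕ)
    (k : P) :
    ∑ l : L with k ∈ l, ∑ p with p ∈ l, N p = ∑ p, N p + order P L * N k := by
  classical
  calc ∑ l : L with k ∈ l, ∑ p with p ∈ l, N p
      = ∑ p, ∑ l : L with k ∈ l ∧ p ∈ l, N p := by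
        simp_rw [sum_filter, ite_and, ← sum_filter (fun l : L => k ∈ l)]
        exact sum_comm
    _ = ∑ p, (1 + if p = k then order P L else 0) * N p := by
        simp_rw [sum_const, card_lines_through_pair, smul_eq_mul]
    _ = ∑ p, N p + order P L * N k := by
        simp [add_mul, sum_add_distrib]

lemma exists_line_eq_zero_of_sum_le [Fintype P] [Finite L] {N : P → ℕ} {k : P}
    (light : ∑ p, N p ≤ order P L + N k) : ∃ l : L, k ∈ l ∧ ∀ p ∈ l, p ≠ k → N p = 0 := by
  classical
  have := Fintype.ofFinite L
  by_contra! crowded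
  have heavy : ∀ l : L, k ∈ l → N k + 1 ≤ ∑ p with p ∈ l, N p := fun l hk => by
    obtain ⟨p, hp, hpk, hNp⟩ := crowded l hk
    calc N k + 1 ≤ ∑ q ∈ {k, p}, N q := by
          rw [sum_pair hpk.symm]; exact Nat.add_le_add_left (Nat.pos_of_ne_zero hNp) _
      _ ≤ ∑ q with q ∈ l, N q := by
          apply sum_le_sum_of_subset; simp [insert_subset_iff, hk, hp]
  have total := card_nsmul_le_sum {l : L | k ∈ l} _ _ fun l hl => heavy l (by simpa using hl)
  rw [card_lines_through, sum_pencil, smul_eq_mul] at total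
  linarith

variable [Fintype P] [Finite L] [∀ (p : P) (l : L), Decidable (p ∈ l)]

lemma sum_eq_one_of_mem_of_eq_zero {N : P → ℕ} (total : ∑ p, N p = order P L + 1)
    (blocking : ∀ l : L, 1 ≤ ∑ p with p ∈ l, N p) {k : P} (hNk : N k = 0) {l : L} (hkl : k ∈ l) :
    ∑ p with p ∈ l, N p = 1 := by
  have := Fintype.ofFinite L
  have pencil : ∑ m : L with k ∈ m, 1 = ∑ m : L with k ∈ m, ∑ p with p ∈ m, N p := by
    rw [sum_pencil, total, hNk, sum_const, card_lines_through, smul_eq_mul, mul_one, mul_zero,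
      add_zero]
  exact ((sum_eq_sum_iff_of_le fun m _ => blocking m).1 pencil l (by simpa)).symm

lemma exists_eq_indicator_line_of_blocking {N : P → ℕ} (total : ∑ p, N p = order P L + 1)
    (blocking : ∀ l : L, 1 ≤ ∑ p with p ∈ l, N p) :
    ∃ l : L, ∀ p, N p = if p ∈ l then 1 else 0 := by
  suffices ∃ l : L, ∀ p ∈ l, N p ≠ 0 by
    obtain ⟨l, hl⟩ := this
    have indicator_le : ∀ p ∈ univ, (if p ∈ l then 1 else 0) ≤ N p := fun p _ => by
      split_ifs with hp
      exacts [Nat.pos_of_ne_zero (hl p hp), Nat.zero_le _]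
    refine ⟨l, fun p => ((sum_eq_sum_iff_of_le indicator_le).1 ?_ p (mem_univ p)).symm⟩
    rw [total, sum_boole, card_points_on, Nat.cast_id]
  by_contra! allLinesMeetZero
  have mass_one : ∀ l : L, ∑ p with p ∈ l, N p = 1 := fun l => by
    obtain ⟨k, hkl, hNk⟩ := allLinesMeetZero l
    exact sum_eq_one_of_mem_of_eq_zero total blocking hNk hkl
  have := Fintype.ofFinite L
  have doubleCount : Fintype.card L = (order P L + 1) * (order P L + 1) := by
    calc Fintype.card L = ∑ l : L, ∑ p with p ∈ l, N p := by simp [mass_one]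
      _ = ∑ p, ∑ l : L with p ∈ l, N p := by simp_rw [sum_filter]; exact sum_comm
      _ = (order P L + 1) * (order P L + 1) := by
        simp_rw [sum_const, card_lines_through, ← smul_sum, total, smul_eq_mul]
  have := one_lt_order P L
  rw [card_lines P L] at doubleCount
  linarith

end ProjectivePlanes

section InnerProducts

open scoped InnerProductSpace

lemma norm_sum_sq_le_card_mul {E ι : Type*} [SeminormedAddCommGroup E] [Fintype ι] (p : ι → E) :
    ‖∑ i, p i‖ ^ 2 ≤ Fintype.card ι * ∑ i, ‖p i‖ ^ 2 :=
  (pow_le_pow_left₀ (norm_nonneg _) (norm_sum_le _ _) 2).trans sq_sum_le_card_mul_sum_sq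

variable {E ι : Type*} [NormedAddCommGroup E] [InnerProductSpace ℝ E]

lemma eq_of_norm_add_card_smul_sub_sum_le {s : Finset ι} {p : ι → E} {α : E} {c : ℝ}
    (hα : ‖α‖ = 1) (hp : ∀ i ∈ s, ‖p i‖ = 1) (h : ‖(s.card + c) • α - ∑ i ∈ s, p i‖ ≤ c) :
    ∀ i ∈ s, p i = α := by
  have inner_le : ∀ i ∈ s, ⟪α, p i⟫_ℝ ≤ 1 := fun i hi => by
    simpa [hα, hp i hi] using real_inner_le_norm α (p i)
  have sum_ge : ∑ _i ∈ s, (1 : ℝ) ≤ ∑ i ∈ s, ⟪α, p i⟫_ℝ := by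
    have := (real_inner_le_norm α _).trans (mul_le_mul_of_nonneg_left h (norm_nonneg α))
    rw [inner_sub_right, inner_smul_right, real_inner_self_eq_norm_sq, hα, inner_sum] at this
    simp only [Finset.sum_const, nsmul_eq_mul]
    linarith
  have inner_eq := (Finset.sum_eq_sum_iff_of_le inner_le).1
    (le_antisymm (Finset.sum_le_sum inner_le) sum_ge)
  exact fun i hi => ((inner_eq_one_iff_of_norm_eq_one hα (hp i hi)).1 (inner_eq i hi)).symm

lemma norm_sq_lt_or_norm_sq_lt {α σ : E} (hσ : ‖σ‖ ^ 2 ≤ 13 * (3 + ‖α‖ ^ 2))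
    (h : ‖(4 + √3) • α - σ‖ ≤ √3) : ‖α‖ ^ 2 < 3 ∨ ‖(4 : ℝ) • α - σ‖ ^ 2 < 9 := by
  set β := (4 : ℝ) • α - σ
  have bounds : 1.7 < √3 ∧ √3 < 1.8 := by
    constructor <;> nlinarith [Real.sqrt_nonneg 3, sqrt_three_sq]
  have height : 3 * ‖α‖ ^ 2 + 2 * √3 * ⟪α, β⟫_ℝ + ‖β‖ ^ 2 ≤ 3 := by
    have : ‖√3 • α + β‖ ^ 2 ≤ √3 ^ 2 := by
      rw [show √3 • α + β = (4 + √3) • α - σ by module]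
      gcongr
    rw [norm_add_sq_real, norm_smul, inner_smul_left, mul_pow, Real.norm_eq_abs, sq_abs,
      sqrt_three_sq] at this
    simpa [mul_assoc] using this
  have cauchy : 16 * ‖α‖ ^ 2 - 8 * ⟪α, β⟫_ℝ + ‖β‖ ^ 2 ≤ 13 * (3 + ‖α‖ ^ 2) := by
    rw [show σ = (4 : ℝ) • α - β by module, norm_sub_sq_real, norm_smul, inner_smul_left] at hσ
    norm_num at hσ
    linarith
  by_contra! large
  obtain ⟨hα, hβ⟩ := large
  nlinarith [sqrt_three_sq]

end InnerProducts

section HermitianForms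

variable {R S : Type*} [CommRing R] [StarRing R] [CommRing S] [StarRing S]

/-- The Hermitian form of `3E₈ ⊕ H` with `θ` replaced by an element `t` of an arbitrary commutative
`*`-ring, so that it makes sense both on `ℰ¹⁴` (at `eisθ`) and on `ℂ¹⁴` (at `θ`, where it is
`herm`). -/
def hermForm (t : R) : (Fin 14 → R) →ₗ⋆[R] (Fin 14 → R) →ₗ[R] R :=
  LinearMap.mk₂'ₛₗ (starRingEnd R) (RingHom.id R)
    (fun u v => -(∑ i : Fin 12, star (u (i.castLE (by norm_num))) * v (i.castLE (by norm_num))) +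
      star (u 12) * star t * v 13 + star (u 13) * t * v 12)
    (fun u u' v => by simp only [Pi.add_apply, star_add, add_mul, Finset.sum_add_distrib]; ring)
    (fun c u v => by
      simp only [Pi.smul_apply, smul_eq_mul, star_mul', mul_assoc, ← Finset.mul_sum,
        starRingEnd_apply]
      ring)
    (fun u v v' => by simp only [Pi.add_apply, mul_add, Finset.sum_add_distrib]; ring)
    (fun c u v => by
      simp only [Pi.smul_apply, smul_eq_mul, mul_left_comm _ c, ← Finset.mul_sum, RingHom.id_apply]
      ring)

lemma hermForm_apply (t : R) (u v : Fin 14 → R) : hermForm t u v =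
    -(∑ i : Fin 12, star (u (i.castLE (by norm_num))) * v (i.castLE (by norm_num))) +
      star (u 12) * star t * v 13 + star (u 13) * t * v 12 := rfl

lemma herm_eq_hermForm (u v : V) : herm u v = hermForm θ u v := rfl

lemma star_hermForm (t : R) (u v : Fin 14 → R) : star (hermForm t u v) = hermForm t v u := by
  simp only [hermForm_apply, star_add, star_neg, star_sum, star_mul', star_star, mul_comm,
    mul_left_comm]
  ring

lemma map_hermForm (f : R →+* S) (hf : ∀ a, f (star a) = star (f a)) (t : R)
    (u v : Fin 14 → R) : f (hermForm t u v) = hermForm (f t) (f ∘ u) (f ∘ v) := by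
  simp only [hermForm_apply, map_add, map_neg, map_sum, map_mul, hf, Function.comp_apply]

lemma sum_smul_eq_of_isOrthoᵢ {K W ι : Type*} [Field K] [AddCommGroup W] [Module K W]
    [FiniteDimensional K W] [Fintype ι] {σ : K →+* K} {B : W →ₛₗ[σ] W →ₗ[K] K} {v : ι → W}
    (ortho : B.IsOrthoᵢ v) (aniso : ∀ i, B (v i) (v i) ≠ 0)
    (card : Fintype.card ι = Module.finrank K W) (x : W) :
    ∑ i, (B (v i) x / B (v i) (v i)) • v i = x := by
  classical
  have independent := LinearMap.linearIndependent_of_isOrthoᵢ ortho aniso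
  have mem_span : x ∈ Submodule.span K (Set.range v) :=
    independent.span_eq_top_of_card_eq_finrank' card ▸ Submodule.mem_top
  obtain ⟨c, rfl⟩ := (Submodule.mem_span_range_iff_exists_fun K).1 mem_span
  refine Finset.sum_congr rfl fun i _ => ?_
  have coeff : B (v i) (∑ j, c j • v j) = c i * B (v i) (v i) := by
    rw [map_sum, Finset.sum_eq_single_of_mem i (Finset.mem_univ i), map_smul, smul_eq_mul]
    intro j _ hj
    rw [map_smul, LinearMap.isOrthoᵢ_def.1 ortho i j hj.symm, smul_zero]
  rw [coeff, mul_div_cancel_right₀ _ (aniso i)]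

end HermitianForms

section Lattice

/-- Vectors of `ℰ¹⁴`, in the coordinates of `3E₈ ⊕ H`. -/
abbrev EisVec : Type := Fin 14 → Eis

/-- The `i`-th coordinate of the `k`-th copy of `E₈`. -/
def coord (k : Fin 3) (i : Fin 4) : Fin 14 := ⟨4 * k + i, by omega⟩

/-- The lattice `L` inside `ℰ¹⁴`; the tetracode is given by its parity checks
`c₁ = c₀ + c₃` and `c₂ = c₃ - c₀`. -/
def InLattice (v : EisVec) : Prop := ∀ k : Fin 3,
  modTheta (v (coord k 1)) = modTheta (v (coord k 0)) + modTheta (v (coord k 3)) ∧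
    modTheta (v (coord k 2)) = modTheta (v (coord k 3)) - modTheta (v (coord k 0))

instance : DecidablePred InLattice := fun v => by unfold InLattice; infer_instance

lemma eq_coord_or_eq (j : Fin 14) : (∃ k i, j = coord k i) ∨ j = 12 ∨ j = 13 := by
  revert j; decide

lemma eisP_apply_of_mem_Lset {r : V} (hr : r ∈ Lset) (j : Fin 14) : EisP (r j) := by
  obtain ⟨hE8, h12, h13⟩ := hr
  rcases eq_coord_or_eq j with ⟨k, i, rfl⟩ | rfl | rfl
  exacts [(hE8 k).1 i, h12, h13]

lemma exists_inLattice_of_mem_Lset {r : V} (hr : r ∈ Lset) :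
    ∃ v, InLattice v ∧ toComplex ∘ v = r := by
  choose v hv using fun j => exists_toComplex_eq (eisP_apply_of_mem_Lset hr j)
  refine ⟨v, fun k => ?_, funext hv⟩
  obtain ⟨-, s, t, hst⟩ := hr.1 k
  have codeword : ∀ i, modTheta (v (coord k i)) = ((tet1 i * s + tet2 i * t : ℤ) : ZMod 3) := by
    intro i
    obtain ⟨a, b, hab⟩ := hst i
    have : v (coord k i) = ((tet1 i * s + tet2 i * t : ℤ) : Eis) + eisθ * ⟨a, b⟩ := by
      apply toComplex_injective
      rw [hv, map_add, map_mul, map_intCast, toComplex_eisθ, toComplex_mk, ← hab]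
      exact (add_sub_cancel _ _).symm
    rw [this, map_add, map_intCast, theta_dvd_iff_modTheta_eq_zero.1 (dvd_mul_right _ _), add_zero]
  simp only [codeword, tet1, tet2]
  constructor
  · simp
  · simp; ring

lemma sum_castLE_eq_sum_coord {M : Type*} [AddCommMonoid M] (f : Fin 14 → M) :
    ∑ i : Fin 12, f (i.castLE (by norm_num)) = ∑ k, ∑ i, f (coord k i) := by
  simp [Fin.sum_univ_succ, coord, add_assoc]

/-- The tetracode is self-orthogonal. -/
lemma theta_dvd_hermForm {u v : EisVec} (hu : InLattice u) (hv : InLattice v) :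
    eisθ ∣ hermForm eisθ u v := by
  have three : (3 : ZMod 3) = 0 := by decide
  have theta : modTheta eisθ = 0 := by decide
  have block : ∀ k, ∑ i, modTheta (u (coord k i)) * modTheta (v (coord k i)) = 0 := by
    intro k
    obtain ⟨hu₁, hu₂⟩ := hu k
    obtain ⟨hv₁, hv₂⟩ := hv k
    rw [Fin.sum_univ_four, hu₁, hu₂, hv₁, hv₂]
    linear_combination (modTheta (u (coord k 0)) * modTheta (v (coord k 0)) +
      modTheta (u (coord k 3)) * modTheta (v (coord k 3))) * three
  rw [theta_dvd_iff_modTheta_eq_zero, hermForm_apply]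
  simp only [map_add, map_neg, map_sum, map_mul, modTheta_star, theta, mul_zero, zero_mul, add_zero]
  rw [sum_castLE_eq_sum_coord fun j => modTheta (u j) * modTheta (v j),
    Finset.sum_eq_zero fun k _ => block k, neg_zero]

lemma herm_toComplex (u v : EisVec) :
    herm (toComplex ∘ u) (toComplex ∘ v) = toComplex (hermForm eisθ u v) := by
  rw [herm_eq_hermForm, ← toComplex_eisθ]
  exact (map_hermForm toComplex.toRingHom toComplex_star eisθ u v).symm

end Lattice

section EisensteinWeights

open Configuration ProjectivePlane

variable {P L : Type*} [Membership P L] [ProjectivePlane P L] [Fintype P] [Finite L]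
  [∀ (p : P) (l : L), Decidable (p ∈ l)] {p : P → Eis}

lemma theta_dvd_of_theta_dvd_sum_line (light : ∑ i, (p i).norm ≤ order P L)
    (dvd_line : ∀ l : L, eisθ ∣ ∑ i with i ∈ l, p i) (k : P) : eisθ ∣ p k := by
  choose N hN using fun i => Int.eq_ofNat_of_zero_le (eis_norm_nonneg (p i))
  have lightN : ∑ i, N i ≤ order P L + N k := by
    simp_rw [hN] at light
    exact (by exact_mod_cast light : ∑ i, N i ≤ order P L).trans (Nat.le_add_right _ _)
  obtain ⟨l, hkl, zero_off⟩ := exists_line_eq_zero_of_sum_le lightN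
  have sum_eq : ∑ i with i ∈ l, p i = p k :=
    Finset.sum_eq_single_of_mem k (by simpa) fun i hi hik =>
      eq_zero_of_norm_eq_zero (by rw [hN, zero_off i (by simpa using hi) hik, Int.ofNat_zero])
  exact sum_eq ▸ dvd_line l

lemma exists_norm_eq_three_of_theta_dvd_sum_line (total : ∑ i, (p i).norm = 3)
    (order_ge : 3 ≤ order P L) (dvd_line : ∀ l : L, eisθ ∣ ∑ i with i ∈ l, p i) :
    ∃ k, (p k).norm = 3 ∧ ∀ i, i ≠ k → p i = 0 := by
  classical
  have dvd : ∀ i, 3 ∣ (p i).norm := fun i => theta_dvd_iff_three_dvd_norm.1 <|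
    theta_dvd_of_theta_dvd_sum_line (total.trans_le (by exact_mod_cast order_ge)) dvd_line i
  obtain ⟨k, -, hk⟩ : ∃ k ∈ Finset.univ, (p k).norm ≠ 0 :=
    Finset.exists_ne_zero_of_sum_ne_zero (by rw [total]; norm_num)
  have three_le : 3 ≤ (p k).norm :=
    Int.le_of_dvd (lt_of_le_of_ne (eis_norm_nonneg _) hk.symm) (dvd k)
  have split := Fintype.sum_eq_add_sum_compl k fun i => (p i).norm
  have rest_nonneg : ∀ i ∈ ({k}ᶜ : Finset P), 0 ≤ (p i).norm := fun i _ => eis_norm_nonneg _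
  have := Finset.sum_nonneg rest_nonneg
  have rest_zero := (Finset.sum_eq_zero_iff_of_nonneg rest_nonneg).1 (by linarith)
  exact ⟨k, by linarith, fun i hi => eq_zero_of_norm_eq_zero (rest_zero i (by simpa))⟩

lemma exists_line_norm_eq_indicator {α : Eis} (total : ∑ i, (p i).norm = order P L + 1)
    (hα : ¬ eisθ ∣ α) (dvd_line : ∀ l : L, eisθ ∣ α - ∑ i with i ∈ l, p i) :
    ∃ l : L, ∀ i, (p i).norm = if i ∈ l then 1 else 0 := by
  choose N hN using fun i => Int.eq_ofNat_of_zero_le (eis_norm_nonneg (p i))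
  have blocking : ∀ l : L, 1 ≤ ∑ i with i ∈ l, N i := fun l => by
    by_contra! empty
    have sum_zero : ∑ i with i ∈ l, p i = 0 := Finset.sum_eq_zero fun i hi =>
      eq_zero_of_norm_eq_zero <| by
        rw [hN, Finset.sum_eq_zero_iff.1 (Nat.lt_one_iff.1 empty) i hi, Int.ofNat_zero]
    exact hα (by simpa [sum_zero] using dvd_line l)
  simp_rw [hN] at total
  obtain ⟨l, hl⟩ := exists_eq_indicator_line_of_blocking (by exact_mod_cast total) blocking
  exact ⟨l, fun i => by rw [hN, hl]; push_cast; rfl⟩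

end EisensteinWeights

section PlaneFrames

open Configuration ProjectivePlane

/-- A projective plane of order three realised by lattice vectors attached to its points and lines:
the points together with a `pole` form an orthogonal basis, and the vector of a line is recovered
from the pole and the points incident with it.  The diagram `D` gives two of these, exchanging the
roles of points and lines; in both of them the Weyl vector lies, up to a complex scalar, in the
plane spanned by the pole and the sum of the points. -/
structure PlaneFrame (P L : Type*) [Membership P L] [ProjectivePlane P L] [Fintype P]
    [∀ (p : P) (l : L), Decidable (p ∈ l)] where
  order_eq : order P L = 3
  point : P → EisVec
  line : L → EisVec
  pole : EisVec
  scale : Eis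
  norm_scale : scale.norm = 3
  point_mem : ∀ i, InLattice (point i)
  line_mem : ∀ l, InLattice (line l)
  pole_mem : InLattice pole
  pole_eq : ∀ l, pole = scale • line l + ∑ i with i ∈ l, point i
  pole_pole : hermForm eisθ pole pole = 3
  pole_point : ∀ i, hermForm eisθ pole (point i) = 0
  point_self : ∀ i, hermForm eisθ (point i) (point i) = -3
  point_point : ∀ i j, i ≠ j → hermForm eisθ (point i) (point j) = 0
  exists_smul_weyl_eq : ∃ u : ℂ, ‖u‖ = 1 ∧ (6 + 8 * √3 : ℂ) • ρbar =
    u • ((4 + √3 : ℂ) • (toComplex ∘ pole) - ∑ i, toComplex ∘ point i)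

namespace PlaneFrame

variable {P L : Type*} [Membership P L] [ProjectivePlane P L] [Fintype P]
  [∀ (p : P) (l : L), Decidable (p ∈ l)] (F : PlaneFrame P L)

lemma point_pole (i : P) : hermForm eisθ (F.point i) F.pole = 0 := by
  rw [← star_hermForm, F.pole_point, star_zero]

lemma card_eq [Finite L] (F : PlaneFrame P L) : Fintype.card P = 13 := by
  rw [card_points P L, F.order_eq]; norm_num

/-- The orthogonal basis of `ℂ¹⁴` consisting of the pole and the points. -/
def basisVec : Option P → V := fun i => toComplex ∘ i.elim F.pole F.point

lemma hermForm_basisVec (i : Option P) (r : EisVec) :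
    hermForm θ (F.basisVec i) (toComplex ∘ r) =
      toComplex (hermForm eisθ (i.elim F.pole F.point) r) :=
  herm_toComplex _ _

lemma isOrthoᵢ_basisVec : (hermForm θ).IsOrthoᵢ F.basisVec := by
  refine LinearMap.isOrthoᵢ_def.2 fun i j hij => (F.hermForm_basisVec i _).trans ?_
  rw [← map_zero toComplex]
  congr 1
  rcases i with - | i <;> rcases j with - | j
  exacts [absurd rfl hij, F.pole_point j, F.point_pole i,
    F.point_point i j fun h => hij (congrArg some h)]

lemma hermForm_basisVec_none : hermForm θ (F.basisVec none) (F.basisVec none) = 3 :=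
  (F.hermForm_basisVec none _).trans ((congrArg toComplex F.pole_pole).trans (map_ofNat _ 3))

lemma hermForm_basisVec_some (i : P) :
    hermForm θ (F.basisVec (some i)) (F.basisVec (some i)) = -3 :=
  (F.hermForm_basisVec (some i) _).trans ((congrArg toComplex (F.point_self i)).trans <| by
    rw [map_neg, map_ofNat])

lemma three_smul_eq [Finite L] (r : EisVec) :
    (3 : Eis) • r =
      hermForm eisθ F.pole r • F.pole - ∑ i, hermForm eisθ (F.point i) r • F.point i := by
  have aniso : ∀ i, hermForm θ (F.basisVec i) (F.basisVec i) ≠ 0 := by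
    rintro (- | i) <;> simp [hermForm_basisVec_none, hermForm_basisVec_some]
  have expansion := sum_smul_eq_of_isOrthoᵢ F.isOrthoᵢ_basisVec aniso
    (by simp [F.card_eq]) (toComplex ∘ r)
  simp only [Fintype.sum_option, hermForm_basisVec_none, hermForm_basisVec_some,
    hermForm_basisVec, Option.elim] at expansion
  ext1 j
  apply toComplex_injective
  have := congrFun expansion j
  simp only [basisVec, Option.elim, Pi.add_apply, Finset.sum_apply, Pi.smul_apply, Pi.sub_apply,
    Function.comp_apply, smul_eq_mul, map_sub, map_sum, map_mul, map_ofNat] at this ⊢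
  rw [← this, mul_add, Finset.mul_sum, sub_eq_add_neg, ← Finset.sum_neg_distrib]
  congr 1
  · ring
  · exact Finset.sum_congr rfl fun i _ => by ring

section Center

/-- The multiple of the Weyl vector determined by the pole and the points. -/
def center : V := (4 + √3 : ℂ) • (toComplex ∘ F.pole) - ∑ i, toComplex ∘ F.point i

lemma hermForm_center (r : EisVec) : hermForm θ F.center (toComplex ∘ r) =
    (4 + √3 : ℂ) * toComplex (hermForm eisθ F.pole r) -
      ∑ i, toComplex (hermForm eisθ (F.point i) r) := by
  have real : (starRingEnd ℂ) (4 + √3 : ℂ) = 4 + √3 := by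
    rw [map_add, Complex.conj_ofReal, map_ofNat]
  simp only [center, map_sub, map_sum, LinearMap.map_smulₛₗ, LinearMap.sub_apply,
    LinearMap.smul_apply, LinearMap.sum_apply, ← herm_eq_hermForm, herm_toComplex, real,
    smul_eq_mul]

lemma hermForm_center_pole : hermForm θ F.center (toComplex ∘ F.pole) = 3 * (4 + √3 : ℂ) := by
  simp only [hermForm_center, F.pole_pole, F.point_pole, map_zero, Finset.sum_const_zero,
    map_ofNat]
  ring

lemma hermForm_center_point (i : P) : hermForm θ F.center (toComplex ∘ F.point i) = 3 := by
  rw [hermForm_center, F.pole_point,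
    Finset.sum_eq_single_of_mem i (Finset.mem_univ i) fun j _ hj => by
      rw [F.point_point j i hj, map_zero],
    F.point_self, map_zero, map_neg, map_ofNat]
  ring

lemma hermForm_center_center [Finite L] :
    hermForm θ F.center F.center = 3 * (6 + 8 * √3 : ℂ) := by
  have sq : (√3 : ℂ) ^ 2 = 3 := by exact_mod_cast sqrt_three_sq
  calc hermForm θ F.center F.center
      = (4 + √3 : ℂ) * hermForm θ F.center (toComplex ∘ F.pole) -
          ∑ i, hermForm θ F.center (toComplex ∘ F.point i) := by
        rw [← smul_eq_mul, ← map_smul, ← map_sum, ← map_sub]; rfl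
    _ = (4 + √3 : ℂ) * (3 * (4 + √3 : ℂ)) - 13 * 3 := by
        simp only [hermForm_center_pole, hermForm_center_point, Finset.sum_const,
          Finset.card_univ, F.card_eq, nsmul_eq_mul, Nat.cast_ofNat]
    _ = 3 * (6 + 8 * √3 : ℂ) := by linear_combination 3 * sq

lemma ht_eq_norm_hermForm_center [Finite L] (v : V) : ht v = ‖hermForm θ F.center v‖ / 3 := by
  obtain ⟨u, hu, weyl⟩ := F.exists_smul_weyl_eq
  change _ = u • F.center at weyl
  have norm_eq : ‖(6 + 8 * √3 : ℂ)‖ = 6 + 8 * √3 := by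
    rw [← Complex.norm_of_nonneg (by positivity : 0 ≤ 6 + 8 * √3)]; push_cast; rfl
  have left (x : V) : (6 + 8 * √3) * ‖hermForm θ ρbar x‖ = ‖hermForm θ F.center x‖ := by
    have := congrArg (fun y => ‖hermForm θ y x‖) weyl
    simpa only [LinearMap.map_smulₛₗ, LinearMap.smul_apply, norm_smul, RCLike.norm_conj, norm_eq,
      hu, one_mul] using this
  have right : (6 + 8 * √3) * ‖hermForm θ F.center ρbar‖ = ‖hermForm θ F.center F.center‖ := by
    have := congrArg (fun y => ‖hermForm θ F.center y‖) weyl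
    simpa only [map_smul, norm_smul, norm_eq, hu, one_mul] using this
  have norm_weyl : (6 + 8 * √3) * ‖hermForm θ ρbar ρbar‖ = 3 := by
    have pos : 0 < 6 + 8 * √3 := by positivity
    apply mul_left_cancel₀ pos.ne'
    rw [left, right, hermForm_center_center, norm_mul, norm_eq, mul_comm]
    simp
  rw [ht, herm_eq_hermForm, herm_eq_hermForm, ← left v,
    ← mul_div_mul_left _ _ (by positivity : 6 + 8 * √3 ≠ 0), norm_weyl]

lemma ht_point [Finite L] (i : P) : ht (toComplex ∘ F.point i) = 1 := by
  rw [F.ht_eq_norm_hermForm_center, hermForm_center_point]; norm_num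

end Center

section Root

variable {r : EisVec} {p : P → Eis} {α : Eis}

lemma ht_eq_norm [Finite L] (hp : ∀ i, hermForm eisθ (F.point i) r = eisθ * p i)
    (hα : hermForm eisθ F.pole r = eisθ * α) : ht (toComplex ∘ r) =
      ‖(4 + √3 : ℂ) * toComplex α - ∑ i, toComplex (p i)‖ / √3 := by
  have norm_theta : ‖θ‖ = √3 := by
    rw [← toComplex_eisθ, norm_toComplex, norm_eisθ, Int.cast_ofNat]
  have factor : hermForm θ F.center (toComplex ∘ r) =
      θ * ((4 + √3 : ℂ) * toComplex α - ∑ i, toComplex (p i)) := by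
    simp only [hermForm_center, hp, hα, map_mul, toComplex_eisθ, mul_sub, Finset.mul_sum]
    ring
  rw [F.ht_eq_norm_hermForm_center, factor, norm_mul, norm_theta,
    div_eq_div_iff (by norm_num) (by positivity)]
  linear_combination ‖(4 + √3 : ℂ) * toComplex α - ∑ i, toComplex (p i)‖ * sqrt_three_sq

lemma sum_norm_eq [Finite L] (hp : ∀ i, hermForm eisθ (F.point i) r = eisθ * p i)
    (hα : hermForm eisθ F.pole r = eisθ * α) (hr : hermForm eisθ r r = -3) :
    ∑ i, (p i).norm = 3 + α.norm := by
  have mul_star_pairing {v : EisVec} {z : Eis} (h : hermForm eisθ v r = eisθ * z) :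
      hermForm eisθ v r * hermForm eisθ r v = 3 * (z.norm : Eis) := by
    rw [← star_hermForm eisθ v r, h, star_mul', star_eisθ, intCast_norm z]
    linear_combination (-z * star z) * eisθ_mul_eisθ
  have := congrArg (hermForm eisθ r) (F.three_smul_eq r)
  simp only [map_smul, map_sub, map_sum, smul_eq_mul, hr, mul_star_pairing hα,
    mul_star_pairing (hp _), ← Finset.mul_sum] at this
  have : (3 : Eis) * (∑ i, (p i).norm : ℤ) = 3 * (3 + α.norm : ℤ) := by
    push_cast
    linear_combination this
  exact_mod_cast mul_left_cancel₀ eis_three_ne_zero this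

lemma theta_dvd_sub_sum (hp : ∀ i, hermForm eisθ (F.point i) r = eisθ * p i)
    (hα : hermForm eisθ F.pole r = eisθ * α) (hr : InLattice r) (l : L) :
    eisθ ∣ α - ∑ i with i ∈ l, p i := by
  obtain ⟨q, hq⟩ := theta_dvd_hermForm (F.line_mem l) hr
  have pairing := congrArg (fun v => hermForm eisθ v r) (F.pole_eq l)
  simp only [map_add, map_sum, LinearMap.map_smulₛₗ, LinearMap.add_apply, LinearMap.smul_apply,
    LinearMap.sum_apply, hα, hp, hq, smul_eq_mul, ← Finset.mul_sum] at pairing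
  have scale_dvd : eisθ ∣ star F.scale := by
    rw [theta_dvd_iff_three_dvd_norm, QuadraticAlgebra.norm_star, F.norm_scale]
  have : α - ∑ i with i ∈ l, p i = star F.scale * q := mul_left_cancel₀ eisθ_ne_zero <| by
    rw [starRingEnd_apply] at pairing
    linear_combination pairing
  exact this ▸ scale_dvd.mul_right q

lemma three_smul_eq_of_pairings [Finite L] (hp : ∀ i, hermForm eisθ (F.point i) r = eisθ * p i)
    (hα : hermForm eisθ F.pole r = eisθ * α) :
    (3 : Eis) • r = eisθ • (α • F.pole - ∑ i, p i • F.point i) := by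
  rw [F.three_smul_eq, hα]
  simp only [hp, mul_smul, ← Finset.smul_sum, ← smul_sub]

lemma exists_eq_smul_point [Finite L] (hp : ∀ i, hermForm eisθ (F.point i) r = eisθ * p i)
    (hα : hermForm eisθ F.pole r = 0) (hr : hermForm eisθ r r = -3) (mem : InLattice r) :
    ∃ u : Eis, u.norm = 1 ∧ ∃ i, r = u • F.point i := by
  have hα : hermForm eisθ F.pole r = eisθ * 0 := by rw [hα, mul_zero]
  have total : ∑ i, (p i).norm = 3 := by simpa using F.sum_norm_eq hp hα hr
  have dvd_line (l : L) : eisθ ∣ ∑ i with i ∈ l, p i := by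
    simpa using F.theta_dvd_sub_sum hp hα mem l
  obtain ⟨k, norm_k, zero_off⟩ :=
    exists_norm_eq_three_of_theta_dvd_sum_line total F.order_eq.ge dvd_line
  obtain ⟨u, hu, hpk⟩ := exists_eq_theta_mul_of_norm_eq_three norm_k
  refine ⟨u, hu, k, smul_right_injective EisVec eis_three_ne_zero ?_⟩
  change (3 : Eis) • r = (3 : Eis) • u • F.point k
  rw [F.three_smul_eq_of_pairings hp hα,
    Finset.sum_eq_single_of_mem k (Finset.mem_univ k) fun i _ hi => by
      rw [zero_off i hi, zero_smul],
    hpk, zero_smul, zero_sub, smul_neg, smul_smul, smul_smul, ← neg_smul]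
  congr 1
  linear_combination -u * eisθ_mul_eisθ

lemma eq_on_line_of_ht_le_one [Finite L] (hp : ∀ i, hermForm eisθ (F.point i) r = eisθ * p i)
    (hα : hermForm eisθ F.pole r = eisθ * α) (norm_α : α.norm = 1) (height : ht (toComplex ∘ r) ≤ 1)
    {l : L} (indicator : ∀ i, (p i).norm = if i ∈ l then 1 else 0) {i : P} (hi : i ∈ l) :
    p i = α := by
  have norm_eq_one {z : Eis} (hz : z.norm = 1) : ‖toComplex z‖ = 1 := by
    rw [norm_toComplex, hz, Int.cast_one, Real.sqrt_one]
  have support : ∑ i with i ∈ l, toComplex (p i) = ∑ i, toComplex (p i) :=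
    Finset.sum_subset (Finset.subset_univ _) fun i _ hi => by
      rw [eq_zero_of_norm_eq_zero ((indicator i).trans (if_neg (by simpa using hi))), map_zero]
  have card : Finset.card {i | i ∈ l} = 4 := by rw [card_points_on, F.order_eq]
  rw [F.ht_eq_norm hp hα, div_le_one (by positivity), ← support] at height
  refine toComplex_injective <| eq_of_norm_add_card_smul_sub_sum_le (s := {i | i ∈ l})
    (p := toComplex ∘ p) (c := √3) (norm_eq_one norm_α) (fun j hj => norm_eq_one ?_) ?_ i (by simpa)
  · rw [indicator, if_pos (by simpa using hj)]
  · rw [card, Complex.real_smul]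
    push_cast
    exact height

lemma exists_eq_smul_line [Finite L] (hp : ∀ i, hermForm eisθ (F.point i) r = eisθ * p i)
    (hα : hermForm eisθ F.pole r = eisθ * α) (norm_α : α.norm = 1) (hr : hermForm eisθ r r = -3)
    (mem : InLattice r) (height : ht (toComplex ∘ r) ≤ 1) :
    ∃ u : Eis, u.norm = 1 ∧ ∃ l, r = u • F.line l := by
  have total : ∑ i, (p i).norm = order P L + 1 := by
    rw [F.sum_norm_eq hp hα hr, norm_α, F.order_eq]; norm_num
  have not_dvd : ¬ eisθ ∣ α := by rw [theta_dvd_iff_three_dvd_norm, norm_α]; norm_num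
  obtain ⟨l, indicator⟩ := exists_line_norm_eq_indicator total not_dvd
    (F.theta_dvd_sub_sum hp hα mem)
  have off_line (i : P) (hi : i ∉ l) : p i = 0 :=
    eq_zero_of_norm_eq_zero (by rw [indicator, if_neg hi])
  have on_line (i : P) (hi : i ∈ l) : p i = α :=
    F.eq_on_line_of_ht_le_one hp hα norm_α height indicator hi
  obtain ⟨u, hu, hscale⟩ := exists_eq_theta_mul_of_norm_eq_three F.norm_scale
  refine ⟨-(α * u), ?_, l, smul_right_injective EisVec eis_three_ne_zero ?_⟩
  · rw [QuadraticAlgebra.norm_neg, map_mul, norm_α, hu, one_mul]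
  have on_support : ∑ i, p i • F.point i = α • ∑ i with i ∈ l, F.point i := by
    rw [Finset.smul_sum, Finset.sum_filter]
    refine Finset.sum_congr rfl fun i _ => ?_
    split_ifs with hi
    exacts [by rw [on_line i hi], by rw [off_line i hi, zero_smul]]
  change (3 : Eis) • r = (3 : Eis) • -(α * u) • F.line l
  rw [F.three_smul_eq_of_pairings hp hα, on_support, ← smul_sub, F.pole_eq l, add_sub_cancel_right,
    hscale]
  simp only [smul_smul]
  congr 1
  linear_combination (α * u) * eisθ_mul_eisθ

lemma exists_eq_smul_of_norm_pairing_lt [Finite L]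
    (hp : ∀ i, hermForm eisθ (F.point i) r = eisθ * p i)
    (hα : hermForm eisθ F.pole r = eisθ * α) (small : α.norm < 3) (hr : hermForm eisθ r r = -3)
    (mem : InLattice r) (height : ht (toComplex ∘ r) ≤ 1) :
    ∃ u : Eis, u.norm = 1 ∧ ((∃ i, r = u • F.point i) ∨ ∃ l, r = u • F.line l) := by
  have nonneg := eis_norm_nonneg α
  have ne_two := norm_ne_two α
  obtain zero | one : α.norm = 0 ∨ α.norm = 1 := by omega
  · rw [eq_zero_of_norm_eq_zero zero, mul_zero] at hα
    obtain ⟨u, hu, hi⟩ := F.exists_eq_smul_point hp hα hr mem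
    exact ⟨u, hu, .inl hi⟩
  · obtain ⟨u, hu, hl⟩ := F.exists_eq_smul_line hp hα one hr mem height
    exact ⟨u, hu, .inr hl⟩

end Root

end PlaneFrame
end PlaneFrames

section Diagram

open Configuration ProjectivePlane

/-- The labels of the points of `P²(𝔽₃)`, in the order of `pt`. -/
abbrev Point : Type := Fin 13

/-- The labels of the lines of `P²(𝔽₃)`, in the order of `lnr`. -/
def Line : Type := Fin 13

instance : Fintype Line := inferInstanceAs (Fintype (Fin 13))

instance : DecidableEq Line := inferInstanceAs (DecidableEq (Fin 13))

/-- The points on each line of `P²(𝔽₃)`. -/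
def pointsOn : Line → Finset Point :=
  ![{0, 4, 5, 6}, {0, 1, 7, 10}, {0, 2, 8, 11}, {0, 3, 9, 12}, {1, 4, 11, 12},
    {2, 5, 10, 12}, {3, 6, 10, 11}, {4, 8, 9, 10}, {5, 7, 9, 11},
    {6, 7, 8, 12}, {2, 3, 4, 7}, {1, 3, 5, 8}, {1, 2, 6, 9}]

instance : Membership Point Line := ⟨fun l i => i ∈ pointsOn l⟩

instance (i : Point) (l : Line) : Decidable (i ∈ l) := inferInstanceAs (Decidable (i ∈ pointsOn l))

instance (l : Dual Line) (i : Dual Point) : Decidable (l ∈ i) :=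
  inferInstanceAs (Decidable ((show Point from i) ∈ (show Line from l)))

lemma card_pointsOn_inter_le_one :
    ∀ l m : Line, l ≠ m → (pointsOn l ∩ pointsOn m).card ≤ 1 := by
  decide

instance : Nondegenerate Point Line where
  exists_point := by decide
  exists_line := by decide
  eq_or_eq {i j l m} hil hjl him hjm := by
    by_contra! distinct
    exact distinct.1 <| Finset.card_le_one.1 (card_pointsOn_inter_le_one l m distinct.2)
      i (Finset.mem_inter.2 ⟨hil, him⟩) j (Finset.mem_inter.2 ⟨hjl, hjm⟩)

lemma exists_point_on_pair : ∀ l m : Line, ∃ i : Point, i ∈ l ∧ i ∈ m := by decide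

lemma exists_line_through_pair : ∀ i j : Point, ∃ l : Line, i ∈ l ∧ j ∈ l := by decide

instance : ProjectivePlane Point Line where
  mkPoint {l m} _ := (exists_point_on_pair l m).choose
  mkPoint_ax {l m} _ := (exists_point_on_pair l m).choose_spec
  mkLine {i j} _ := (exists_line_through_pair i j).choose
  mkLine_ax {i j} _ := (exists_line_through_pair i j).choose_spec
  exists_config := ⟨2, 0, 4, by decide +kernel⟩

lemma order_point_line : order Point Line = 3 := by
  have card := card_points Point Line
  change 13 = _ at card
  nlinarith

/-- The entry `-θω²` of the roots of `D`, corresponding to `qc`. -/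
def eisq : Eis := -(eisθ * eisω ^ 2)

/-- The point roots of `D` with entries in `ℰ`. -/
def eisPoint : Point → EisVec :=
  ![![0, 0, 0, 0, 0, 0, 0, 0, 0, 0, 0, 0, 1, eisω ^ 2],
    ![eisq, 0, 0, 0, 0, 0, 0, 0, 0, 0, 0, 0, 0, 0],
    ![0, 0, 0, 0, eisq, 0, 0, 0, 0, 0, 0, 0, 0, 0],
    ![0, 0, 0, 0, 0, 0, 0, 0, eisq, 0, 0, 0, 0, 0],
    ![0, eisq, 0, 0, 0, 0, 0, 0, 0, 0, 0, 0, 0, 0],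
    ![0, 0, 0, 0, 0, eisq, 0, 0, 0, 0, 0, 0, 0, 0],
    ![0, 0, 0, 0, 0, 0, 0, 0, 0, eisq, 0, 0, 0, 0],
    ![0, 0, 0, 0, 0, 0, 0, eisq, 0, 0, 0, eisq, eisω, eisω ^ 2],
    ![0, 0, 0, eisq, 0, 0, 0, 0, 0, 0, 0, eisq, eisω, eisω ^ 2],
    ![0, 0, 0, eisq, 0, 0, 0, eisq, 0, 0, 0, 0, eisω, eisω ^ 2],
    ![0, 0, 0, eisq, 0, 0, -eisq, eisq, 0, 0, -eisq, eisq, 2 * eisω, 2 * eisω ^ 2],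
    ![0, 0, -eisq, eisq, 0, 0, 0, eisq, 0, 0, -eisq, eisq, 2 * eisω, 2 * eisω ^ 2],
    ![0, 0, -eisq, eisq, 0, 0, -eisq, eisq, 0, 0, 0, eisq, 2 * eisω, 2 * eisω ^ 2]]

/-- The line roots of `D` with entries in `ℰ`. -/
def eisLine : Line → EisVec :=
  ![![0, 1, 1, -2, 0, 1, 1, -2, 0, 1, 1, -2, -2 + eisω, -eisθ],
    ![1, 0, 1, -1, 0, 0, 0, 0, 0, 0, 0, 0, -1, 0],
    ![0, 0, 0, 0, 1, 0, 1, -1, 0, 0, 0, 0, -1, 0],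
    ![0, 0, 0, 0, 0, 0, 0, 0, 1, 0, 1, -1, -1, 0],
    ![1, 1, -1, 0, 0, 0, 0, 0, 0, 0, 0, 0, 0, 0],
    ![0, 0, 0, 0, 1, 1, -1, 0, 0, 0, 0, 0, 0, 0],
    ![0, 0, 0, 0, 0, 0, 0, 0, 1, 1, -1, 0, 0, 0],
    ![0, 1, 1, 1, 0, 0, 0, 0, 0, 0, 0, 0, 0, 0],
    ![0, 0, 0, 0, 0, 1, 1, 1, 0, 0, 0, 0, 0, 0],
    ![0, 0, 0, 0, 0, 0, 0, 0, 0, 1, 1, 1, 0, 0],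
    ![0, 1, 1, -2, 1, 0, 1, -1, 1, 0, 1, -1, eisq, -eisθ],
    ![1, 0, 1, -1, 0, 1, 1, -2, 1, 0, 1, -1, eisq, -eisθ],
    ![1, 0, 1, -1, 1, 0, 1, -1, 0, 1, 1, -2, eisq, -eisθ]]

/-- The vector `w_𝒫` with `13 w_𝒫 = (1 - ω) ∑ l + 4 ∑ x`. -/
def pointPole : EisVec :=
  ![0, 0, -eisq, 2 * eisq, 0, 0, -eisq, 2 * eisq, 0, 0, -eisq, 2 * eisq, 4 * eisω, 4 * eisω ^ 2]

/-- The vector `w_ℒ` with `13 w_ℒ = (2 + ω) ∑ x + 4 ∑ l`. -/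
def linePole : EisVec :=
  ![1, 1, 2, -3, 1, 1, 2, -3, 1, 1, 2, -3, -3 + 2 * eisω, -2 - 4 * eisω]

lemma toComplex_eisq : toComplex eisq = qc := by
  rw [eisq, qc, map_neg, map_mul, map_pow, toComplex_eisθ, toComplex_eisω]

lemma toComplex_comp_vecCons {n : ℕ} (z : Eis) (v : Fin n → Eis) :
    toComplex ∘ Matrix.vecCons z v = Matrix.vecCons (toComplex z) (toComplex ∘ v) :=
  Fin.comp_cons toComplex z v

lemma toComplex_eisPoint (i : Point) : toComplex ∘ eisPoint i = pt i := by
  have two : toComplex 2 = 2 := map_ofNat _ 2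
  have empty : toComplex ∘ ![] = ![] := Subsingleton.elim _ _
  fin_cases i <;> simp [eisPoint, pt, toComplex_comp_vecCons, toComplex_eisq, toComplex_eisω, two,
    empty, rA, rC1, rC2, rC3, rE1, rE2, rE3, rA1, rA2, rA3, rG1, rG2, rG3]

lemma toComplex_eisLine (l : Line) : toComplex ∘ eisLine l = lnr l := by
  have two : toComplex 2 = 2 := map_ofNat _ 2
  have empty : toComplex ∘ ![] = ![] := Subsingleton.elim _ _
  fin_cases l <;> simp [eisLine, lnr, toComplex_comp_vecCons, toComplex_eisq, toComplex_eisω, two,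
    empty, toComplex_eisθ, rF, rB1, rB2, rB3, rD1, rD2, rD3, rF1, rF2, rF3, rZ1, rZ2, rZ3]

lemma inLattice_eisPoint : ∀ i, InLattice (eisPoint i) := by decide +kernel

lemma inLattice_eisLine : ∀ l, InLattice (eisLine l) := by decide +kernel

lemma hermForm_eisPoint : ∀ i j, hermForm eisθ (eisPoint i) (eisPoint j) =
    if i = j then -3 else 0 := by
  decide +kernel

lemma hermForm_eisLine : ∀ l m, hermForm eisθ (eisLine l) (eisLine m) =
    if l = m then -3 else 0 := by
  decide +kernel

lemma pointPole_eq : ∀ l : Line,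
    pointPole = (1 - eisω) • eisLine l + ∑ i with i ∈ l, eisPoint i := by
  decide +kernel

lemma linePole_eq : ∀ i : Point,
    linePole = (2 + eisω) • eisPoint i + ∑ l : Line with i ∈ l, eisLine l := by
  decide +kernel

lemma hermForm_linePole_eisLine : ∀ l, hermForm eisθ linePole (eisLine l) = 0 := by decide +kernel

lemma thirteen_smul_pointPole :
    (13 : Eis) • pointPole = (1 - eisω) • ∑ l, eisLine l + (4 : Eis) • ∑ i, eisPoint i := by
  decide +kernel

lemma thirteen_smul_linePole :
    (13 : Eis) • linePole = (2 + eisω) • ∑ i, eisPoint i + (4 : Eis) • ∑ l, eisLine l := by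
  decide +kernel

lemma three_smul_linePole :
    (3 : Eis) • linePole = (2 + eisω) • ((4 : Eis) • pointPole - ∑ i, eisPoint i) := by
  decide +kernel

lemma smul_weyl_eq_of_thirteen_smul_eq {a b w : V}
    (hw : (13 : ℂ) • w = (√3 : ℂ) • b + (4 : ℂ) • a) :
    (6 + 8 * √3 : ℂ) • (26 : ℂ)⁻¹ • (a + b) = (4 + √3 : ℂ) • w - a := by
  have sq : (√3 : ℂ) ^ 2 = 3 := by exact_mod_cast sqrt_three_sq
  ext j
  have hj := congrFun hw j
  simp only [Pi.smul_apply, Pi.add_apply, Pi.sub_apply, smul_eq_mul] at hj ⊢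
  linear_combination -(4 + √3) / 13 * hj - b j / 13 * sq

lemma toComplex_comp_smul (z : Eis) (v : EisVec) :
    toComplex ∘ (z • v) = toComplex z • (toComplex ∘ v) :=
  funext fun j => map_mul toComplex z (v j)

lemma toComplex_comp_add (v w : EisVec) :
    toComplex ∘ (v + w) = toComplex ∘ v + toComplex ∘ w :=
  funext fun j => map_add toComplex (v j) (w j)

lemma toComplex_comp_sum {ι : Type*} [Fintype ι] (v : ι → EisVec) :
    toComplex ∘ (∑ i, v i) = ∑ i, toComplex ∘ v i := by
  ext j
  simp only [Function.comp_apply, Finset.sum_apply, map_sum]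

lemma smul_weyl_eq_pointPole : (6 + 8 * √3 : ℂ) • ρbar =
    (4 + √3 : ℂ) • (toComplex ∘ pointPole) - ∑ i, toComplex ∘ eisPoint i := by
  simp_rw [ρbar, toComplex_eisPoint]
  apply smul_weyl_eq_of_thirteen_smul_eq
  have := congrArg (toComplex ∘ ·) thirteen_smul_pointPole
  simp only [toComplex_comp_smul, toComplex_comp_add, toComplex_comp_sum, map_sub, map_ofNat,
    map_one, toComplex_eisω, toComplex_eisPoint, toComplex_eisLine] at this
  rw [smul_smul, sqrt_three_mul_xi]
  exact this

lemma smul_weyl_eq_linePole : (6 + 8 * √3 : ℂ) • ρbar =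
    ξ • ((4 + √3 : ℂ) • (toComplex ∘ linePole) - ∑ l, toComplex ∘ eisLine l) := by
  simp_rw [ρbar, toComplex_eisLine, smul_sub, smul_comm ξ, add_comm (∑ i, pt i)]
  apply smul_weyl_eq_of_thirteen_smul_eq
  have := congrArg (toComplex ∘ ·) thirteen_smul_linePole
  simp only [toComplex_comp_smul, toComplex_comp_add, toComplex_comp_sum, map_add, map_ofNat,
    toComplex_eisω, toComplex_eisPoint, toComplex_eisLine] at this
  rw [smul_comm _ ξ, this, smul_add, smul_smul, xi_mul_two_add_omega, smul_comm ξ]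
  rfl

/-- The frame whose orthogonal vectors are the point roots of `D`. -/
def pointFrame : PlaneFrame Point Line where
  order_eq := order_point_line
  point := eisPoint
  line := eisLine
  pole := pointPole
  scale := 1 - eisω
  norm_scale := by decide
  point_mem := inLattice_eisPoint
  line_mem := inLattice_eisLine
  pole_mem := by decide +kernel
  pole_eq := pointPole_eq
  pole_pole := by decide +kernel
  pole_point := by decide +kernel
  point_self i := by rw [hermForm_eisPoint, if_pos rfl]
  point_point i j hij := by rw [hermForm_eisPoint, if_neg hij]
  exists_smul_weyl_eq := ⟨1, norm_one, by rw [one_smul]; exact smul_weyl_eq_pointPole⟩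

/-- The frame whose orthogonal vectors are the line roots of `D`. -/
def lineFrame : PlaneFrame (Dual Line) (Dual Point) where
  order_eq := (Dual.order Point Line).trans order_point_line
  point := eisLine
  line := eisPoint
  pole := linePole
  scale := 2 + eisω
  norm_scale := by decide
  point_mem := inLattice_eisLine
  line_mem := inLattice_eisPoint
  pole_mem := by decide +kernel
  pole_eq := linePole_eq
  pole_pole := by decide +kernel
  pole_point := hermForm_linePole_eisLine
  point_self l := (hermForm_eisLine l l).trans (if_pos rfl)
  point_point l m hlm := (hermForm_eisLine l m).trans (if_neg hlm)
  exists_smul_weyl_eq := ⟨ξ, norm_xi, smul_weyl_eq_linePole⟩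

section Root

variable {r : EisVec}

lemma three_mul_norm_linePole_pairing {p : Point → Eis} {α β : Eis}
    (hp : ∀ i, hermForm eisθ (eisPoint i) r = eisθ * p i)
    (hα : hermForm eisθ pointPole r = eisθ * α) (hβ : hermForm eisθ linePole r = eisθ * β) :
    3 * β.norm = (4 * α - ∑ i, p i).norm := by
  have pairing := congrArg (fun v => hermForm eisθ v r) three_smul_linePole
  simp only [map_sub, map_sum, LinearMap.map_smulₛₗ, LinearMap.sub_apply, LinearMap.smul_apply,
    LinearMap.sum_apply, hα, hp, hβ, smul_eq_mul, ← Finset.mul_sum, starRingEnd_apply,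
    star_ofNat] at pairing
  have relation : 3 * β = star (2 + eisω) * (4 * α - ∑ i, p i) :=
    mul_left_cancel₀ eisθ_ne_zero <| by linear_combination pairing
  have := congrArg QuadraticAlgebra.norm relation
  rw [map_mul, map_mul, show QuadraticAlgebra.norm (3 : Eis) = 9 by decide,
    show QuadraticAlgebra.norm (star (2 + eisω)) = 3 by decide] at this
  linarith

lemma norm_lt_three_or_norm_lt_three {p : Point → Eis} {α β : Eis}
    (hp : ∀ i, hermForm eisθ (eisPoint i) r = eisθ * p i)
    (hα : hermForm eisθ pointPole r = eisθ * α) (hβ : hermForm eisθ linePole r = eisθ * β)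
    (hr : hermForm eisθ r r = -3) (height : ht (toComplex ∘ r) ≤ 1) :
    α.norm < 3 ∨ β.norm < 3 := by
  have cauchySchwarz : ‖∑ i, toComplex (p i)‖ ^ 2 ≤ 13 * (3 + ‖toComplex α‖ ^ 2) := by
    have := norm_sum_sq_le_card_mul fun i => toComplex (p i)
    simp only [norm_toComplex_sq] at this ⊢
    rw [← Int.cast_sum, pointFrame.sum_norm_eq hp hα hr, Fintype.card_fin] at this
    exact_mod_cast this
  rw [pointFrame.ht_eq_norm hp hα, div_le_one (by positivity)] at height
  have dichotomy := norm_sq_lt_or_norm_sq_lt cauchySchwarz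
    (by rw [Complex.real_smul]; push_cast; exact height)
  have combination : (4 : ℝ) • toComplex α - ∑ i, toComplex (p i) =
      toComplex (4 * α - ∑ i, p i) := by
    rw [map_sub, map_mul, map_sum, map_ofNat, Complex.real_smul, Complex.ofReal_ofNat]
  rw [combination, norm_toComplex_sq, norm_toComplex_sq,
    ← three_mul_norm_linePole_pairing hp hα hβ] at dichotomy
  refine dichotomy.imp (fun h => by exact_mod_cast h) fun h => ?_
  have : 3 * β.norm < 9 := by exact_mod_cast h
  linarith

lemma exists_eq_smul_of_ht_le_one (mem : InLattice r) (hr : hermForm eisθ r r = -3)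
    (height : ht (toComplex ∘ r) ≤ 1) :
    ∃ u : Eis, u.norm = 1 ∧ ((∃ i, r = u • eisPoint i) ∨ ∃ l, r = u • eisLine l) := by
  choose p hp using fun i => theta_dvd_hermForm (pointFrame.point_mem i) mem
  choose q hq using fun l => theta_dvd_hermForm (lineFrame.point_mem l) mem
  obtain ⟨α, hα⟩ := theta_dvd_hermForm pointFrame.pole_mem mem
  obtain ⟨β, hβ⟩ := theta_dvd_hermForm lineFrame.pole_mem mem
  rcases norm_lt_three_or_norm_lt_three hp hα hβ hr height with small | small
  · exact pointFrame.exists_eq_smul_of_norm_pairing_lt hp hα small hr mem height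
  · obtain ⟨u, hu, h⟩ := lineFrame.exists_eq_smul_of_norm_pairing_lt hq hβ small hr mem height
    exact ⟨u, hu, h.symm⟩

end Root

lemma IsRoot.exists_eq_smul_of_ht_le_one {r : V} (hr : IsRoot r) (height : ht r ≤ 1) :
    ∃ u : ℂ, EisUnit u ∧ ∃ s ∈ D26, r = u • s := by
  obtain ⟨v, mem, rfl⟩ := exists_inLattice_of_mem_Lset hr.1
  have norm_v : hermForm eisθ v v = -3 := toComplex_injective <| by
    rw [← herm_toComplex, hr.2.1, map_neg, map_ofNat]
  obtain ⟨u, hu, h⟩ := Bimonster.exists_eq_smul_of_ht_le_one mem norm_v height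
  refine ⟨toComplex u, eisUnit_toComplex hu, ?_⟩
  rcases h with ⟨i, rfl⟩ | ⟨l, rfl⟩
  · exact ⟨pt i, .inl ⟨i, rfl⟩, by rw [toComplex_comp_smul, toComplex_eisPoint]⟩
  · exact ⟨lnr l, .inr ⟨l, rfl⟩, by rw [toComplex_comp_smul, toComplex_eisLine]⟩

lemma ht_smul_of_eisUnit {u : ℂ} (hu : EisUnit u) (v : V) : ht (u • v) = ht v := by
  rw [ht, ht, herm_eq_hermForm, map_smul, norm_smul, norm_eq_one_of_eisUnit hu, one_mul,
    ← herm_eq_hermForm]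

lemma ht_eq_one_of_mem_D26 {s : V} (hs : s ∈ D26) : ht s = 1 := by
  rcases hs with ⟨i, rfl⟩ | ⟨l, rfl⟩
  · exact toComplex_eisPoint i ▸ pointFrame.ht_point i
  · exact toComplex_eisLine l ▸ lineFrame.ht_point l

end Diagram

/-- Every root of `L` has height at least one, and the roots of height exactly one
are precisely the unit multiples of the 26 roots of the diagram `D`. -/
theorem stmt4 : ∀ r : V, IsRoot r →
    1 ≤ ht r ∧ (ht r = 1 ↔ ∃ u : ℂ, EisUnit u ∧ ∃ s ∈ D26, r = u • s) := by
  intro r hr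
  have ht_eq_one : (∃ u : ℂ, EisUnit u ∧ ∃ s ∈ D26, r = u • s) → ht r = 1 := by
    rintro ⟨u, hu, s, hs, rfl⟩
    rw [ht_smul_of_eisUnit hu, ht_eq_one_of_mem_D26 hs]
  refine ⟨?_, fun height => hr.exists_eq_smul_of_ht_le_one height.le, ht_eq_one⟩
  by_contra! low
  exact low.ne (ht_eq_one (hr.exists_eq_smul_of_ht_le_one low.le))

end Bimonster
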